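/- (Correctness of the non-local box protocol) Let a, b ∈ S² be unit vectors, let λ₀, λ₁ be independent uniform on S², and let γ be a uniform bit in {0, 1} independent of (λ₀, λ₁). Define x = 0 if |a·λ₁| ≤ |a·λ₀| and x = 1 otherwise; y = 0 if sgn(b·λ₀) = sgn(b·λ₁) and y = 1 otherwise; λ_x = λ₀ if x = 0 and λ_x = λ₁ if x = 1; β = γ ⊕ (x ∧ y); A = -sgn(a·((-1)^γ λ_x)); and B = sgn(b·((-1)^β λ₀)). Then for all α', β' ∈ {-1, 1}, P(A = α' and B = β') = (1 - α'β' a·b)/4; in particular E(AB) = -a·b and E(A) = E(B) = 0, so the singlet correlations are simulated using shared randomness and one use of a PR non-local box. -/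

import Mathlib

open MeasureTheory Metric
open scoped RealInnerProductSpace ENNReal

/-- The unit sphere in ℝ³. -/
noncomputable abbrev Sphere2 := Metric.sphere (0 : EuclideanSpace ℝ (Fin 3)) 1

/-- The surface measure `σ` on the unit sphere of ℝ³ (total mass `4π`). -/
noncomputable def sphereMeasure : Measure Sphere2 :=
  (volume : Measure (EuclideanSpace ℝ (Fin 3))).toSphere

/-- The uniform probability measure `σ/(4π)` on the unit sphere of ℝ³. -/
noncomputable def uniformSphere : Measure Sphere2 :=
  (ENNReal.ofReal (4 * Real.pi))⁻¹ • sphereMeasure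

/-- A fair coin: the uniform distribution on `{0, 1}`. -/
noncomputable def coin : Measure Bool := (PMF.uniformOfFintype Bool).toMeasure

/-- The joint distribution of two independent uniform points `λ₀, λ₁` on `S²` and an
independent uniform bit `γ` (Alice's output bit of the PR non-local box). -/
noncomputable def nlMeasure : Measure ((Sphere2 × Sphere2) × Bool) :=
  (uniformSphere.prod uniformSphere).prod coin

/-- `sgn(x) = 1` if `x ≥ 0`, `-1` if `x < 0`. -/
noncomputable def sgn (x : ℝ) : ℝ := if 0 ≤ x then 1 else -1

/-- Alice's box input: `x = 0` iff `|a·λ₁| ≤ |a·λ₀|` (the choice method). -/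
noncomputable def boxX (a : EuclideanSpace ℝ (Fin 3)) (p : Sphere2 × Sphere2) : Bool :=
  if |⟪a, (p.2 : EuclideanSpace ℝ (Fin 3))⟫| ≤ |⟪a, (p.1 : EuclideanSpace ℝ (Fin 3))⟫|
  then false else true

/-- Bob's box input: `y = 0` iff `sgn(b·λ₀) = sgn(b·λ₁)`. -/
noncomputable def boxY (b : EuclideanSpace ℝ (Fin 3)) (p : Sphere2 × Sphere2) : Bool :=
  if sgn ⟪b, (p.1 : EuclideanSpace ℝ (Fin 3))⟫ = sgn ⟪b, (p.2 : EuclideanSpace ℝ (Fin 3))⟫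
  then false else true

/-- The vector accepted by the choice method: `λ_x = λ₀` if `x = 0`, `λ₁` if `x = 1`. -/
noncomputable def lamX (a : EuclideanSpace ℝ (Fin 3)) (p : Sphere2 × Sphere2) :
    EuclideanSpace ℝ (Fin 3) :=
  if boxX a p then (p.2 : EuclideanSpace ℝ (Fin 3)) else (p.1 : EuclideanSpace ℝ (Fin 3))

/-- Alice's output `A = -sgn(a·((-1)^γ λ_x))`. -/
noncomputable def outA (a : EuclideanSpace ℝ (Fin 3)) (q : (Sphere2 × Sphere2) × Bool) : ℝ :=
  -sgn ⟪a, ((-1 : ℝ) ^ q.2.toNat) • lamX a q.1⟫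

/-- Bob's output `B = sgn(b·((-1)^β λ₀))` with `β = γ ⊕ (x ∧ y)`. -/
noncomputable def outB (a b : EuclideanSpace ℝ (Fin 3)) (q : (Sphere2 × Sphere2) × Bool) : ℝ :=
  sgn ⟪b, ((-1 : ℝ) ^ (xor q.2 (boxX a q.1 && boxY b q.1)).toNat) •
    (q.1.1 : EuclideanSpace ℝ (Fin 3))⟫

/-- The slice at height `u` of the part of the unit ball of `ℝ × ℝ²` cut out by a double cone. -/
lemma volume_annulus {t : ℝ} (ht : 0 < t) (ht1 : t ≤ 1) (u : ℝ) :
    volume {y : EuclideanSpace ℝ (Fin 2) | u ^ 2 + ‖y‖ ^ 2 < 1 ∧ u ^ 2 < t ^ 2 * (u ^ 2 + ‖y‖ ^ 2)}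
      = ENNReal.ofReal (Real.pi * (1 - u ^ 2 / t ^ 2)) := by
  have ht2 : 0 < t ^ 2 := by positivity
  rcases lt_or_ge (u ^ 2) (t ^ 2) with hu | hu
  · have hu1 : u ^ 2 < 1 := by nlinarith
    have hr : 0 ≤ u ^ 2 / t ^ 2 - u ^ 2 := by
      rw [sub_nonneg, le_div_iff₀ ht2]
      nlinarith [mul_le_of_le_one_right (sq_nonneg u) (pow_le_one₀ ht.le ht1 : t ^ 2 ≤ 1)]
    have hq : u ^ 2 / t ^ 2 < 1 := (div_lt_one ht2).2 hu
    have hset : {y : EuclideanSpace ℝ (Fin 2) |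
        u ^ 2 + ‖y‖ ^ 2 < 1 ∧ u ^ 2 < t ^ 2 * (u ^ 2 + ‖y‖ ^ 2)}
        = ball 0 (√(1 - u ^ 2)) \ closedBall 0 (√(u ^ 2 / t ^ 2 - u ^ 2)) := by
      ext y
      simp only [Set.mem_ofPred_eq, Set.mem_sdiff, mem_ball_zero_iff, mem_closedBall_zero_iff, not_le,
        Real.lt_sqrt (norm_nonneg y)]
      rw [Real.sqrt_lt hr (norm_nonneg y), sub_lt_iff_lt_add, div_lt_iff₀ ht2]
      constructor <;> rintro ⟨h1, h2⟩ <;> constructor <;> nlinarith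
    rw [hset, measure_sdiff _ measurableSet_closedBall.nullMeasurableSet measure_closedBall_lt_top.ne,
      EuclideanSpace.volume_ball_fin_two, EuclideanSpace.volume_closedBall_fin_two,
      ← ENNReal.ofReal_pow (Real.sqrt_nonneg _), ← ENNReal.ofReal_pow (Real.sqrt_nonneg _),
      Real.sq_sqrt hr, Real.sq_sqrt (by linarith), ← ENNReal.ofReal_mul hr,
      ← ENNReal.ofReal_mul (by linarith), ← ENNReal.ofReal_sub _ (by positivity)]
    · congr 1
      ring
    · exact closedBall_subset_ball (Real.sqrt_lt_sqrt hr (by linarith))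
  · have hq : 1 ≤ u ^ 2 / t ^ 2 := (one_le_div ht2).2 hu
    rw [ENNReal.ofReal_of_nonpos (by nlinarith [Real.pi_pos])]
    convert measure_empty (μ := volume)
    ext y
    simp only [Set.mem_ofPred_eq, Set.mem_empty_iff_false, iff_false, not_and, not_lt]
    intro h
    nlinarith

lemma lintegral_annulus {t : ℝ} (ht : 0 < t) :
    ∫⁻ u : ℝ, ENNReal.ofReal (Real.pi * (1 - u ^ 2 / t ^ 2))
      = ENNReal.ofReal (4 * Real.pi / 3 * t) := by
  have ht2 : 0 < t ^ 2 := by positivity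
  have hsupp : Function.support (fun u : ℝ => ENNReal.ofReal (Real.pi * (1 - u ^ 2 / t ^ 2)))
      ⊆ Set.Ioc (-t) t := by
    intro u hu
    simp only [Function.mem_support, ne_eq, ENNReal.ofReal_eq_zero, not_le] at hu
    have h1 : u ^ 2 / t ^ 2 < 1 := by
      by_contra! h
      nlinarith [Real.pi_pos]
    rw [div_lt_one ht2] at h1
    have := abs_lt.1 (abs_lt_of_sq_lt_sq h1 ht.le)
    exact ⟨this.1, this.2.le⟩
  rw [← setLIntegral_eq_of_support_subset hsupp, ← ofReal_integral_eq_lintegral_ofReal,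
    ← intervalIntegral.integral_of_le (by linarith)]
  · congr 1
    rw [intervalIntegral.integral_const_mul, intervalIntegral.integral_sub (by simp)
      (Continuous.intervalIntegrable (by fun_prop) _ _), intervalIntegral.integral_div, integral_pow]
    simp
    field_simp
    ring
  · exact (Continuous.integrableOn_Icc (by fun_prop)).mono_set Set.Ioc_subset_Icc_self
  · refine (ae_restrict_iff' measurableSet_Ioc).2 (.of_forall fun u hu => ?_)
    have : u ^ 2 / t ^ 2 ≤ 1 := (div_le_one ht2).2 (sq_le_sq' hu.1.le hu.2)
    exact mul_nonneg Real.pi_pos.le (by simpa using this)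

lemma volume_ball_inter_cone_zero {t : ℝ} (ht : 0 < t) (ht1 : t ≤ 1) :
    volume {z : EuclideanSpace ℝ (Fin 3) | ‖z‖ < 1 ∧ |z 0| < t * ‖z‖}
      = ENNReal.ofReal (4 * Real.pi / 3 * t) := by
  have hmp := (((MeasurePreserving.id (volume : Measure ℝ)).prod
    (PiLp.volume_preserving_toLp (Fin 2))).comp
      (volume_preserving_piFinSuccAbove (fun _ : Fin 3 => ℝ) 0)).comp
      (PiLp.volume_preserving_ofLp (Fin 3))
  have hS : MeasurableSet {w : ℝ × EuclideanSpace ℝ (Fin 2) |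
      w.1 ^ 2 + ‖w.2‖ ^ 2 < 1 ∧ w.1 ^ 2 < t ^ 2 * (w.1 ^ 2 + ‖w.2‖ ^ 2)} := by
    rw [Set.ofPred_and]
    refine (measurableSet_lt ?_ ?_).inter (measurableSet_lt ?_ ?_) <;> fun_prop
  have hpre := hmp.measure_preimage hS.nullMeasurableSet
  rw [Measure.prod_apply hS] at hpre
  simp only [Set.preimage_ofPred_eq] at hpre
  simp only [volume_annulus ht ht1, lintegral_annulus ht] at hpre
  rw [← hpre]
  congr 1
  ext z
  have hz : ‖z‖ ^ 2 = z 0 ^ 2 + ‖WithLp.toLp 2 (Fin.removeNth 0 z.ofLp)‖ ^ 2 := by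
    simp [EuclideanSpace.real_norm_sq_eq, Fin.sum_univ_succ, Fin.tail]
  simp only [Set.mem_ofPred_eq, Function.comp, Prod.map, id, MeasurableEquiv.piFinSuccAbove_apply]
  change _ ↔ z 0 ^ 2 + ‖WithLp.toLp 2 (Fin.removeNth 0 z.ofLp)‖ ^ 2 < 1 ∧
    z 0 ^ 2 < t ^ 2 * (z 0 ^ 2 + ‖WithLp.toLp 2 (Fin.removeNth 0 z.ofLp)‖ ^ 2)
  rw [← hz, ← mul_pow, sq_lt_one_iff₀ (norm_nonneg _), sq_lt_sq, abs_of_nonneg (a := t * ‖z‖)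
    (by positivity)]

/-- Every unit vector is the first vector of some orthonormal basis. -/
lemma exists_orthonormalBasis_zero_eq {a : EuclideanSpace ℝ (Fin 3)} (ha : ‖a‖ = 1) :
    ∃ e : OrthonormalBasis (Fin 3) ℝ (EuclideanSpace ℝ (Fin 3)), e 0 = a := by
  obtain ⟨e, he⟩ := Orthonormal.exists_orthonormalBasis_extension_of_card_eq
    (𝕜 := ℝ) (E := EuclideanSpace ℝ (Fin 3)) (ι := Fin 3) (by simp) (v := fun _ => a)
    (s := {0}) ⟨fun _ => ha, fun i j hij => (hij (Subsingleton.elim i j)).elim⟩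
  exact ⟨e, he 0 rfl⟩

lemma volume_ball_inter_cone {a : EuclideanSpace ℝ (Fin 3)} (ha : ‖a‖ = 1) {t : ℝ}
    (ht : 0 < t) (ht1 : t ≤ 1) :
    volume {z : EuclideanSpace ℝ (Fin 3) | ‖z‖ < 1 ∧ |⟪a, z⟫| < t * ‖z‖}
      = ENNReal.ofReal (4 * Real.pi / 3 * t) := by
  obtain ⟨e, rfl⟩ := exists_orthonormalBasis_zero_eq ha
  rw [← volume_ball_inter_cone_zero ht ht1, ← e.repr.measurePreserving.measure_preimage_emb
    e.repr.toHomeomorph.measurableEmbedding {z | ‖z‖ < 1 ∧ |z 0| < t * ‖z‖}]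
  simp [OrthonormalBasis.repr_apply_apply]

instance : IsProbabilityMeasure uniformSphere where
  measure_univ := by
    rw [uniformSphere, sphereMeasure, Measure.smul_apply, Measure.toSphere_apply_univ,
      EuclideanSpace.volume_ball_fin_three, smul_eq_mul]
    have h : ((Module.finrank ℝ (EuclideanSpace ℝ (Fin 3)) : ℕ) : ℝ≥0∞) = ENNReal.ofReal 3 := by
      simp
    rw [h, ENNReal.ofReal_one, one_pow, one_mul, ← ENNReal.ofReal_mul (by norm_num),
      show 3 * (Real.pi * 4 / 3) = 4 * Real.pi by ring]
    exact ENNReal.inv_mul_cancel (by simp [Real.pi_pos]) ENNReal.ofReal_ne_top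

open scoped Pointwise in
lemma uniformSphere_apply {s : Set Sphere2} (hs : MeasurableSet s) :
    uniformSphere s = (ENNReal.ofReal (4 * Real.pi))⁻¹ * (3 * volume
      (Set.Ioo (0 : ℝ) 1 • ((↑) '' s : Set (EuclideanSpace ℝ (Fin 3))))) := by
  simp [uniformSphere, sphereMeasure, Measure.toSphere_apply' _ hs]

/-- The Archimedes hat-box theorem: the height of a uniform point on the sphere is uniform. -/
lemma uniformSphere_abs_inner_lt {a : EuclideanSpace ℝ (Fin 3)} (ha : ‖a‖ = 1) {t : ℝ}
    (ht : 0 < t) (ht1 : t ≤ 1) :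
    uniformSphere {l | |⟪a, (l : EuclideanSpace ℝ (Fin 3))⟫| < t} = ENNReal.ofReal t := by
  have hm : MeasurableSet {l : Sphere2 | |⟪a, (l : EuclideanSpace ℝ (Fin 3))⟫| < t} :=
    measurableSet_lt (by fun_prop) (by fun_prop)
  open scoped Pointwise in
  have hset : Set.Ioo (0 : ℝ) 1 • ((↑) '' {l : Sphere2 | |⟪a, (l : EuclideanSpace ℝ (Fin 3))⟫| < t})
      = {z : EuclideanSpace ℝ (Fin 3) | ‖z‖ < 1 ∧ |⟪a, z⟫| < t * ‖z‖} := by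
    ext z
    simp only [Set.mem_smul, Set.mem_image, Set.mem_ofPred_eq]
    constructor
    · rintro ⟨r, hr, _, ⟨l, hl, rfl⟩, rfl⟩
      have hn : ‖(l : EuclideanSpace ℝ (Fin 3))‖ = 1 := by simp
      rw [norm_smul, hn, inner_smul_right, abs_mul, Real.norm_eq_abs, abs_of_pos hr.1, mul_one]
      exact ⟨hr.2, by nlinarith [hr.1]⟩
    · rintro ⟨h1, h2⟩
      have hz : 0 < ‖z‖ := by
        by_contra! h
        nlinarith [abs_nonneg ⟪a, z⟫]
      refine ⟨‖z‖, ⟨hz, h1⟩, ‖z‖⁻¹ • z, ⟨⟨‖z‖⁻¹ • z, ?_⟩, ?_, rfl⟩, ?_⟩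
      · simp [norm_smul, hz.ne']
      · rw [inner_smul_right, abs_mul, abs_inv, abs_norm, inv_mul_lt_iff₀ hz]
        linarith
      · rw [smul_smul, mul_inv_cancel₀ hz.ne', one_smul]
  rw [uniformSphere_apply hm, hset, volume_ball_inter_cone ha ht ht1,
    show (3 : ℝ≥0∞) = ENNReal.ofReal 3 by simp, ← ENNReal.ofReal_mul (by norm_num),
    show 3 * (4 * Real.pi / 3 * t) = 4 * Real.pi * t by ring,
    ENNReal.ofReal_mul (p := 4 * Real.pi) (by positivity),
    ← mul_assoc, ENNReal.inv_mul_cancel (by simp [Real.pi_pos]) ENNReal.ofReal_ne_top, one_mul]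

lemma map_abs_inner {a : EuclideanSpace ℝ (Fin 3)} (ha : ‖a‖ = 1) :
    uniformSphere.map (fun l : Sphere2 => |⟪a, (l : EuclideanSpace ℝ (Fin 3))⟫|)
      = volume.restrict (Set.Icc (0 : ℝ) 1) := by
  have hm : Measurable (fun l : Sphere2 => |⟪a, (l : EuclideanSpace ℝ (Fin 3))⟫|) := by fun_prop
  have := Measure.isProbabilityMeasure_map (μ := uniformSphere) hm.aemeasurable
  refine Measure.ext_of_Ici _ _ fun t => ?_
  have hle (l : Sphere2) : |⟪a, (l : EuclideanSpace ℝ (Fin 3))⟫| ≤ 1 := by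
    simpa [ha] using abs_real_inner_le_norm a (l : EuclideanSpace ℝ (Fin 3))
  rw [Measure.restrict_apply measurableSet_Ici, Measure.map_apply hm measurableSet_Ici]
  rcases le_or_gt t 0 with h0 | h0
  · have h : Set.Ici t ∩ Set.Icc (0 : ℝ) 1 = Set.Icc 0 1 :=
      Set.inter_eq_right.2 fun x hx => h0.trans hx.1
    have hc : (fun l : Sphere2 => |⟪a, (l : EuclideanSpace ℝ (Fin 3))⟫|) ⁻¹' Set.Ici t
        = Set.univ := Set.eq_univ_of_forall fun l => h0.trans (abs_nonneg _)
    rw [h, hc]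
    simp
  rcases le_or_gt t 1 with h1 | h1
  · have h : Set.Ici t ∩ Set.Icc (0 : ℝ) 1 = Set.Icc t 1 := by
      ext x
      simp only [Set.mem_inter_iff, Set.mem_Ici, Set.mem_Icc]
      constructor
      · tauto
      · exact fun h => ⟨h.1, h0.le.trans h.1, h.2⟩
    have hc : (fun l : Sphere2 => |⟪a, (l : EuclideanSpace ℝ (Fin 3))⟫|) ⁻¹' Set.Ici t
        = {l : Sphere2 | |⟪a, (l : EuclideanSpace ℝ (Fin 3))⟫| < t}ᶜ := by
      ext l
      simp
    rw [h, hc, prob_compl_eq_one_sub (measurableSet_lt hm measurable_const),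
      uniformSphere_abs_inner_lt ha h0 h1, Real.volume_Icc, ENNReal.ofReal_sub _ h0.le,
      ENNReal.ofReal_one]
  · have h : Set.Ici t ∩ Set.Icc (0 : ℝ) 1 = ∅ := by
      ext x
      simp only [Set.mem_inter_iff, Set.mem_Ici, Set.mem_Icc, Set.mem_empty_iff_false, iff_false]
      rintro ⟨h2, -, h3⟩
      linarith
    have hc : (fun l : Sphere2 => |⟪a, (l : EuclideanSpace ℝ (Fin 3))⟫|) ⁻¹' Set.Ici t = ∅ := by
      ext l
      simpa using (hle l).trans_lt h1
    rw [h, hc, measure_empty, measure_empty]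

lemma ae_inner_ne_zero {a : EuclideanSpace ℝ (Fin 3)} (ha : ‖a‖ = 1) :
    ∀ᵐ l : Sphere2 ∂uniformSphere, ⟪a, (l : EuclideanSpace ℝ (Fin 3))⟫ ≠ 0 := by
  have hm : Measurable (fun l : Sphere2 => |⟪a, (l : EuclideanSpace ℝ (Fin 3))⟫|) := by fun_prop
  have h : ∀ᵐ x ∂(uniformSphere.map fun l : Sphere2 => |⟪a, (l : EuclideanSpace ℝ (Fin 3))⟫|),
      x ≠ 0 := by
    rw [map_abs_inner ha]
    exact Measure.ae_ne _ 0
  simpa using ae_of_ae_map hm.aemeasurable h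

lemma integral_abs_inner {a : EuclideanSpace ℝ (Fin 3)} (ha : ‖a‖ = 1) :
    ∫ l : Sphere2, |⟪a, (l : EuclideanSpace ℝ (Fin 3))⟫| ∂uniformSphere = 1 / 2 := by
  have hm : Measurable (fun l : Sphere2 => |⟪a, (l : EuclideanSpace ℝ (Fin 3))⟫|) := by fun_prop
  have h := integral_map (μ := uniformSphere) hm.aemeasurable
    (f := fun x : ℝ => x) (by fun_prop)
  rw [← h, map_abs_inner ha, integral_Icc_eq_integral_Ioc,
    ← intervalIntegral.integral_of_le zero_le_one, integral_id]
  norm_num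

lemma uniformSphere_real_abs_inner_le {a : EuclideanSpace ℝ (Fin 3)} (ha : ‖a‖ = 1) {t : ℝ}
    (ht : 0 ≤ t) (ht1 : t ≤ 1) :
    uniformSphere.real {l | |⟪a, (l : EuclideanSpace ℝ (Fin 3))⟫| ≤ t} = t := by
  have hm : Measurable (fun l : Sphere2 => |⟪a, (l : EuclideanSpace ℝ (Fin 3))⟫|) := by fun_prop
  have h := map_measureReal_apply (μ := uniformSphere) hm (measurableSet_Iic (a := t))
  have hI : Set.Iic t ∩ Set.Icc (0 : ℝ) 1 = Set.Icc 0 t := by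
    ext x
    simp only [Set.mem_inter_iff, Set.mem_Iic, Set.mem_Icc]
    exact ⟨fun h => ⟨h.2.1, h.1⟩, fun h => ⟨h.2, h.1, h.2.trans ht1⟩⟩
  rw [map_abs_inner ha, measureReal_restrict_apply measurableSet_Iic, hI] at h
  rw [Real.volume_real_Icc_of_le ht, sub_zero] at h
  exact h.symm

lemma uniformSphere_real_abs_inner_lt {a : EuclideanSpace ℝ (Fin 3)} (ha : ‖a‖ = 1) {t : ℝ}
    (ht : 0 ≤ t) (ht1 : t ≤ 1) :
    uniformSphere.real {l | |⟪a, (l : EuclideanSpace ℝ (Fin 3))⟫| < t} = t := by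
  rcases ht.eq_or_lt with rfl | h0
  · simp [(abs_nonneg _).not_gt]
  · rw [measureReal_def, uniformSphere_abs_inner_lt ha h0 ht1, ENNReal.toReal_ofReal ht]

/-- The action of a linear isometry on the unit sphere. -/
noncomputable def sphereMap (g : EuclideanSpace ℝ (Fin 3) ≃ₗᵢ[ℝ] EuclideanSpace ℝ (Fin 3))
    (l : Sphere2) : Sphere2 :=
  ⟨g l, by simp⟩

lemma measurePreserving_sphereMap
    (g : EuclideanSpace ℝ (Fin 3) ≃ₗᵢ[ℝ] EuclideanSpace ℝ (Fin 3)) :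
    MeasurePreserving (sphereMap g) uniformSphere uniformSphere := by
  have hm : Measurable (sphereMap g) :=
    (g.continuous.measurable.comp measurable_subtype_coe).subtype_mk
  refine ⟨hm, ?_⟩
  ext s hs
  rw [Measure.map_apply hm hs, uniformSphere_apply hs, uniformSphere_apply (hm hs)]
  congr 2
  refine .trans ?_ (g.measurePreserving.measure_preimage_emb g.toHomeomorph.measurableEmbedding _)
  congr 1
  ext z
  simp only [Set.mem_smul, Set.mem_image, Set.mem_preimage]
  constructor
  · rintro ⟨r, hr, _, ⟨l, hl, rfl⟩, rfl⟩
    exact ⟨r, hr, _, ⟨_, hl, rfl⟩, by simp [sphereMap]⟩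
  · rintro ⟨r, hr, _, ⟨l, hl, rfl⟩, h⟩
    refine ⟨r, hr, g.symm l, ⟨⟨g.symm l, by simp⟩, ?_, rfl⟩, ?_⟩
    · simpa [sphereMap] using hl
    · rw [← map_smul, h, g.symm_apply_apply]

lemma measurable_sgn : Measurable sgn :=
  Measurable.ite measurableSet_Ici measurable_const measurable_const

lemma sgn_eq_one_or (x : ℝ) : sgn x = 1 ∨ sgn x = -1 := by
  unfold sgn
  split_ifs <;> simp

lemma abs_sgn (x : ℝ) : |sgn x| = 1 := by
  rcases sgn_eq_one_or x with h | h <;> simp [h]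

lemma sgn_neg {x : ℝ} (hx : x ≠ 0) : sgn (-x) = -sgn x := by
  unfold sgn
  rcases hx.lt_or_gt with h | h
  · simp [h.le, not_le.2 h]
  · simp [h.le, not_le.2 h]

lemma abs_mul_sgn (x : ℝ) : |x| * sgn x = x := by
  unfold sgn
  split_ifs with h
  · rw [abs_of_nonneg h, mul_one]
  · rw [abs_of_neg (not_le.1 h)]
    ring

lemma mul_sgn_self (x : ℝ) : x * sgn x = |x| := by
  unfold sgn
  split_ifs with h
  · rw [abs_of_nonneg h, mul_one]
  · rw [abs_of_neg (not_le.1 h)]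
    ring

lemma abs_inner_le_one {a : EuclideanSpace ℝ (Fin 3)} (ha : ‖a‖ = 1) (l : Sphere2) :
    |⟪a, (l : EuclideanSpace ℝ (Fin 3))⟫| ≤ 1 := by
  simpa [ha] using abs_real_inner_le_norm a (l : EuclideanSpace ℝ (Fin 3))

lemma measurable_sgn_inner (a : EuclideanSpace ℝ (Fin 3)) :
    Measurable fun l : Sphere2 => sgn ⟪a, (l : EuclideanSpace ℝ (Fin 3))⟫ :=
  measurable_sgn.comp (by fun_prop)

lemma integrable_inner_mul_sgn (c b : EuclideanSpace ℝ (Fin 3)) :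
    Integrable (fun l : Sphere2 => ⟪c, (l : EuclideanSpace ℝ (Fin 3))⟫ *
      sgn ⟪b, (l : EuclideanSpace ℝ (Fin 3))⟫) uniformSphere := by
  refine .of_bound (C := ‖c‖) ?_ (.of_forall fun l => ?_)
  · exact (Measurable.mul (by fun_prop) (measurable_sgn_inner b)).aestronglyMeasurable
  · rw [norm_mul, Real.norm_eq_abs, Real.norm_eq_abs, abs_sgn, mul_one]
    simpa using abs_real_inner_le_norm c (l : EuclideanSpace ℝ (Fin 3))

lemma integral_inner_mul_sgn_of_orthogonal {b c : EuclideanSpace ℝ (Fin 3)} (hbc : ⟪b, c⟫ = 0) :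
    ∫ l : Sphere2, ⟪c, (l : EuclideanSpace ℝ (Fin 3))⟫ *
      sgn ⟪b, (l : EuclideanSpace ℝ (Fin 3))⟫ ∂uniformSphere = 0 := by
  set K : Submodule ℝ (EuclideanSpace ℝ (Fin 3)) := ℝ ∙ b
  have hb : K.reflection b = b :=
    K.reflection_mem_subspace_eq_self (Submodule.mem_span_singleton_self b)
  have hc : K.reflection c = -c :=
    K.reflection_mem_subspace_orthogonalComplement_eq_neg
      (Submodule.mem_orthogonal_singleton_iff_inner_right.2 hbc)
  have hbl (l : EuclideanSpace ℝ (Fin 3)) : ⟪b, K.reflection l⟫ = ⟪b, l⟫ := by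
    rw [← K.reflection.inner_map_map b l, hb]
  have hcl (l : EuclideanSpace ℝ (Fin 3)) : ⟪c, K.reflection l⟫ = -⟪c, l⟫ := by
    rw [← K.reflection.inner_map_map c l, hc, inner_neg_left, neg_neg]
  have h := integral_map (measurePreserving_sphereMap K.reflection).measurable.aemeasurable
    ((measurePreserving_sphereMap K.reflection).map_eq ▸
      (integrable_inner_mul_sgn c b).aestronglyMeasurable)
  rw [(measurePreserving_sphereMap K.reflection).map_eq] at h
  simp only [sphereMap, hbl, hcl, neg_mul, integral_neg] at h
  linarith

lemma integral_inner_mul_sgn (a : EuclideanSpace ℝ (Fin 3)) {b : EuclideanSpace ℝ (Fin 3)}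
    (hb : ‖b‖ = 1) :
    ∫ l : Sphere2, ⟪a, (l : EuclideanSpace ℝ (Fin 3))⟫ *
      sgn ⟪b, (l : EuclideanSpace ℝ (Fin 3))⟫ ∂uniformSphere = ⟪a, b⟫ / 2 := by
  have hbc : ⟪b, a - ⟪a, b⟫ • b⟫ = 0 := by
    rw [inner_sub_right, inner_smul_right, real_inner_self_eq_norm_sq, hb, real_inner_comm]
    ring
  have hsplit (l : Sphere2) : ⟪a, (l : EuclideanSpace ℝ (Fin 3))⟫ *
      sgn ⟪b, (l : EuclideanSpace ℝ (Fin 3))⟫ =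
      ⟪a, b⟫ * |⟪b, (l : EuclideanSpace ℝ (Fin 3))⟫| +
      ⟪a - ⟪a, b⟫ • b, (l : EuclideanSpace ℝ (Fin 3))⟫ *
        sgn ⟪b, (l : EuclideanSpace ℝ (Fin 3))⟫ := by
    rw [← mul_sgn_self, inner_sub_left, real_inner_smul_left]
    ring
  simp_rw [hsplit]
  rw [integral_add _ (integrable_inner_mul_sgn _ _), integral_inner_mul_sgn_of_orthogonal hbc,
    integral_const_mul, integral_abs_inner hb]
  · ring
  · simp_rw [← mul_sgn_self]
    exact (integrable_inner_mul_sgn b b).const_mul _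

/-- The uniform point accepted by the choice method has density `2|a·λ|`. -/
lemma integral_lamX {a : EuclideanSpace ℝ (Fin 3)} (ha : ‖a‖ = 1)
    {s : EuclideanSpace ℝ (Fin 3) → ℝ} (hs : Measurable s) {C : ℝ} (hC : ∀ v, |s v| ≤ C) :
    ∫ p, s (lamX a p) ∂(uniformSphere.prod uniformSphere)
      = 2 * ∫ l : Sphere2, |⟪a, (l : EuclideanSpace ℝ (Fin 3))⟫| * s l ∂uniformSphere := by
  set h : Sphere2 → ℝ := fun l => |⟪a, (l : EuclideanSpace ℝ (Fin 3))⟫| with hh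
  have hm : Measurable h := by fun_prop
  have hle : MeasurableSet {p : Sphere2 × Sphere2 | h p.2 ≤ h p.1} :=
    measurableSet_le (by fun_prop) (by fun_prop)
  have hlt : MeasurableSet {p : Sphere2 × Sphere2 | h p.1 < h p.2} :=
    measurableSet_lt (by fun_prop) (by fun_prop)
  have hi1 : Integrable (fun p : Sphere2 × Sphere2 => s p.1) (uniformSphere.prod uniformSphere) :=
    .of_bound (hs.comp (by fun_prop)).aestronglyMeasurable C (.of_forall fun p => hC p.1)
  have hi2 : Integrable (fun p : Sphere2 × Sphere2 => s p.2) (uniformSphere.prod uniformSphere) :=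
    .of_bound (hs.comp (by fun_prop)).aestronglyMeasurable C (.of_forall fun p => hC p.2)
  have hsplit (p : Sphere2 × Sphere2) : s (lamX a p) =
      {p : Sphere2 × Sphere2 | h p.2 ≤ h p.1}.indicator (fun p => s p.1) p +
      {p : Sphere2 × Sphere2 | h p.1 < h p.2}.indicator (fun p => s p.2) p := by
    by_cases hp : h p.2 ≤ h p.1
    · have := not_lt.2 hp
      simp_all [lamX, boxX]
    · have := not_le.1 hp
      simp_all [lamX, boxX]
  simp_rw [hsplit]
  rw [integral_add (hi1.indicator hle) (hi2.indicator hlt),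
    integral_prod _ (hi1.indicator hle), integral_prod_symm _ (hi2.indicator hlt), two_mul]
  congr 1
  · congr 1 with l
    have hset : MeasurableSet {l' | h l' ≤ h l} := measurableSet_le hm measurable_const
    have := integral_indicator_const (μ := uniformSphere) (s l) hset
    rw [uniformSphere_real_abs_inner_le ha (abs_nonneg _) (abs_inner_le_one ha l), smul_eq_mul]
      at this
    exact this
  · congr 1 with l
    have hset : MeasurableSet {l' | h l' < h l} := measurableSet_lt hm measurable_const
    have := integral_indicator_const (μ := uniformSphere) (s l) hset
    rw [uniformSphere_real_abs_inner_lt ha (abs_nonneg _) (abs_inner_le_one ha l), smul_eq_mul]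
      at this
    exact this

lemma integral_sgn_mul_sgn_lamX {a b : EuclideanSpace ℝ (Fin 3)} (ha : ‖a‖ = 1) (hb : ‖b‖ = 1) :
    ∫ p, sgn ⟪a, lamX a p⟫ * sgn ⟪b, lamX a p⟫ ∂(uniformSphere.prod uniformSphere) = ⟪a, b⟫ := by
  rw [integral_lamX ha (s := fun v => sgn ⟪a, v⟫ * sgn ⟪b, v⟫) (C := 1)
    ((measurable_sgn.comp (by fun_prop)).mul (measurable_sgn.comp (by fun_prop)))
    (fun v => by rw [abs_mul, abs_sgn, abs_sgn, one_mul])]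
  simp_rw [← mul_assoc, abs_mul_sgn]
  rw [integral_inner_mul_sgn a hb]
  ring

lemma sgn_inner_neg_one_pow_smul {b v : EuclideanSpace ℝ (Fin 3)} (h : ⟪b, v⟫ ≠ 0) (γ : Bool) :
    sgn ⟪b, (-1 : ℝ) ^ γ.toNat • v⟫ = (-1) ^ γ.toNat * sgn ⟪b, v⟫ := by
  cases γ <;> simp [sgn_neg h]

lemma inner_lamX_ne_zero {a : EuclideanSpace ℝ (Fin 3)} {p : Sphere2 × Sphere2}
    (h1 : ⟪a, (p.1 : EuclideanSpace ℝ (Fin 3))⟫ ≠ 0)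
    (h2 : ⟪a, (p.2 : EuclideanSpace ℝ (Fin 3))⟫ ≠ 0) : ⟪a, lamX a p⟫ ≠ 0 := by
  unfold lamX
  split_ifs <;> assumption

/-- Off a null set Bob outputs the sign of `b` against the vector accepted by Alice. -/
lemma outB_eq (a : EuclideanSpace ℝ (Fin 3)) {b : EuclideanSpace ℝ (Fin 3)}
    {p : Sphere2 × Sphere2} (h : ⟪b, (p.1 : EuclideanSpace ℝ (Fin 3))⟫ ≠ 0) (γ : Bool) :
    outB a b (p, γ) = (-1) ^ γ.toNat * sgn ⟪b, lamX a p⟫ := by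
  rw [outB, sgn_inner_neg_one_pow_smul h]
  rcases hx : boxX a p with _ | _
  · simp [lamX, hx]
  · by_cases hy : sgn ⟪b, (p.1 : EuclideanSpace ℝ (Fin 3))⟫
        = sgn ⟪b, (p.2 : EuclideanSpace ℝ (Fin 3))⟫
    · simp [lamX, hx, boxY, hy]
    · have hneg : sgn ⟪b, (p.1 : EuclideanSpace ℝ (Fin 3))⟫
          = -sgn ⟪b, (p.2 : EuclideanSpace ℝ (Fin 3))⟫ := by
        rcases sgn_eq_one_or ⟪b, (p.1 : EuclideanSpace ℝ (Fin 3))⟫ with h1 | h1 <;>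
        rcases sgn_eq_one_or ⟪b, (p.2 : EuclideanSpace ℝ (Fin 3))⟫ with h2 | h2 <;>
        simp_all
      have hy' : boxY b p = true := by simp [boxY, hy]
      simp only [lamX, hx, hy', hneg]
      cases γ <;> simp

lemma measurable_boxX (a : EuclideanSpace ℝ (Fin 3)) : Measurable (boxX a) :=
  Measurable.ite (measurableSet_le (by fun_prop) (by fun_prop)) measurable_const measurable_const

lemma measurable_boxY (b : EuclideanSpace ℝ (Fin 3)) : Measurable (boxY b) :=
  Measurable.ite (measurableSet_eq_fun ((measurable_sgn_inner b).comp measurable_fst)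
    ((measurable_sgn_inner b).comp measurable_snd)) measurable_const measurable_const

lemma measurable_lamX (a : EuclideanSpace ℝ (Fin 3)) : Measurable (lamX a) :=
  Measurable.ite (measurable_boxX a (measurableSet_singleton true)) (by fun_prop) (by fun_prop)

lemma measurable_neg_one_pow_toNat : Measurable fun γ : Bool => (-1 : ℝ) ^ γ.toNat :=
  .of_discrete

lemma measurable_outA (a : EuclideanSpace ℝ (Fin 3)) : Measurable (outA a) :=
  (measurable_sgn.comp (Measurable.const_inner
    ((measurable_neg_one_pow_toNat.comp measurable_snd).smul
      ((measurable_lamX a).comp measurable_fst)))).neg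

lemma measurable_outB (a b : EuclideanSpace ℝ (Fin 3)) : Measurable (outB a b) := by
  have hβ : Measurable fun z : Bool × Bool × Bool => (-1 : ℝ) ^ (xor z.1 (z.2.1 && z.2.2)).toNat :=
    .of_discrete
  exact measurable_sgn.comp (Measurable.const_inner ((hβ.comp (measurable_snd.prodMk
    (((measurable_boxX a).comp measurable_fst).prodMk
      ((measurable_boxY b).comp measurable_fst)))).smul (by fun_prop)))

instance : IsProbabilityMeasure coin :=
  inferInstanceAs (IsProbabilityMeasure (PMF.toMeasure _))

instance : IsProbabilityMeasure nlMeasure :=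
  inferInstanceAs (IsProbabilityMeasure (Measure.prod _ _))

lemma integral_coin (f : Bool → ℝ) : ∫ γ, f γ ∂coin = (f false + f true) / 2 := by
  rw [coin, PMF.integral_eq_sum]
  simp
  ring

lemma outA_eq_one_or (a : EuclideanSpace ℝ (Fin 3)) (q : (Sphere2 × Sphere2) × Bool) :
    outA a q = 1 ∨ outA a q = -1 := by
  unfold outA
  rcases sgn_eq_one_or ⟪a, (-1 : ℝ) ^ q.2.toNat • lamX a q.1⟫ with h | h <;> simp [h]

lemma outB_eq_one_or (a b : EuclideanSpace ℝ (Fin 3)) (q : (Sphere2 × Sphere2) × Bool) :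
    outB a b q = 1 ∨ outB a b q = -1 :=
  sgn_eq_one_or _

lemma integrable_outA (a : EuclideanSpace ℝ (Fin 3)) : Integrable (outA a) nlMeasure :=
  .of_bound (measurable_outA a).aestronglyMeasurable 1 (.of_forall fun q => by
    rcases outA_eq_one_or a q with h | h <;> simp [h])

lemma integrable_outB (a b : EuclideanSpace ℝ (Fin 3)) : Integrable (outB a b) nlMeasure :=
  .of_bound (measurable_outB a b).aestronglyMeasurable 1 (.of_forall fun q => by
    rcases outB_eq_one_or a b q with h | h <;> simp [h])

lemma integrable_outA_mul_outB (a b : EuclideanSpace ℝ (Fin 3)) :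
    Integrable (fun q => outA a q * outB a b q) nlMeasure :=
  .of_bound ((measurable_outA a).mul (measurable_outB a b)).aestronglyMeasurable 1
    (.of_forall fun q => by
      rcases outA_eq_one_or a q with h | h <;> rcases outB_eq_one_or a b q with h' | h' <;>
      simp [h, h'])

lemma integral_nlMeasure {f : (Sphere2 × Sphere2) × Bool → ℝ} (hf : Integrable f nlMeasure) :
    ∫ q, f q ∂nlMeasure
      = ∫ p, (f (p, false) + f (p, true)) / 2 ∂(uniformSphere.prod uniformSphere) := by
  rw [nlMeasure, integral_prod f hf]
  simp_rw [integral_coin]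

lemma ae_outA_eq {a : EuclideanSpace ℝ (Fin 3)} (ha : ‖a‖ = 1) :
    ∀ᵐ p ∂(uniformSphere.prod uniformSphere), ∀ γ,
      outA a (p, γ) = -((-1) ^ γ.toNat * sgn ⟪a, lamX a p⟫) := by
  filter_upwards [Measure.quasiMeasurePreserving_fst.ae (ae_inner_ne_zero ha),
    Measure.quasiMeasurePreserving_snd.ae (ae_inner_ne_zero ha)] with p h1 h2 γ
  rw [outA, sgn_inner_neg_one_pow_smul (inner_lamX_ne_zero h1 h2)]

lemma ae_outB_eq (a : EuclideanSpace ℝ (Fin 3)) {b : EuclideanSpace ℝ (Fin 3)} (hb : ‖b‖ = 1) :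
    ∀ᵐ p ∂(uniformSphere.prod uniformSphere), ∀ γ,
      outB a b (p, γ) = (-1) ^ γ.toNat * sgn ⟪b, lamX a p⟫ := by
  filter_upwards [Measure.quasiMeasurePreserving_fst.ae (ae_inner_ne_zero hb)] with p h γ
  exact outB_eq a h γ

lemma integral_outA {a : EuclideanSpace ℝ (Fin 3)} (ha : ‖a‖ = 1) :
    ∫ q, outA a q ∂nlMeasure = 0 := by
  rw [integral_nlMeasure (integrable_outA a)]
  refine integral_eq_zero_of_ae ?_
  filter_upwards [ae_outA_eq ha] with p hp
  simp [hp]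

lemma integral_outB (a : EuclideanSpace ℝ (Fin 3)) {b : EuclideanSpace ℝ (Fin 3)} (hb : ‖b‖ = 1) :
    ∫ q, outB a b q ∂nlMeasure = 0 := by
  rw [integral_nlMeasure (integrable_outB a b)]
  refine integral_eq_zero_of_ae ?_
  filter_upwards [ae_outB_eq a hb] with p hp
  simp [hp]

lemma integral_outA_mul_outB {a b : EuclideanSpace ℝ (Fin 3)} (ha : ‖a‖ = 1) (hb : ‖b‖ = 1) :
    ∫ q, outA a q * outB a b q ∂nlMeasure = -⟪a, b⟫ := by
  rw [integral_nlMeasure (integrable_outA_mul_outB a b), ← integral_sgn_mul_sgn_lamX ha hb,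
    ← integral_neg]
  refine integral_congr_ae ?_
  filter_upwards [ae_outA_eq ha, ae_outB_eq a hb] with p hA hB
  simp only [hA, hB, Bool.toNat_false, Bool.toNat_true]
  ring

/-- **Correctness of the non-local box protocol.** Using shared uniform `λ₀, λ₁` on
`S²`, a uniform bit `γ`, and one use of a PR non-local box (`α = γ`,
`β = γ ⊕ (x ∧ y)`), the outputs `A, B` reproduce the singlet distribution:
`P(A = α', B = β') = (1 - α'β' a·b)/4` for all `α', β' ∈ {-1, 1}`; in particular
`E(AB) = -a·b` and `E(A) = E(B) = 0`. -/
theorem nonlocal_box_protocol_correct (a b : EuclideanSpace ℝ (Fin 3))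
    (ha : ‖a‖ = 1) (hb : ‖b‖ = 1) :
    (∀ α' β' : ℝ, (α' = 1 ∨ α' = -1) → (β' = 1 ∨ β' = -1) →
      nlMeasure {q | outA a q = α' ∧ outB a b q = β'}
        = ENNReal.ofReal ((1 - α' * β' * ⟪a, b⟫) / 4)) ∧
    (∫ q, outA a q * outB a b q ∂nlMeasure = -⟪a, b⟫) ∧
    (∫ q, outA a q ∂nlMeasure = 0) ∧
    (∫ q, outB a b q ∂nlMeasure = 0) := by
  refine ⟨fun α β hα hβ => ?_, integral_outA_mul_outB ha hb, integral_outA ha, integral_outB a hb⟩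
  have hm : MeasurableSet {q | outA a q = α ∧ outB a b q = β} :=
    (measurable_outA a (measurableSet_singleton α)).inter
      (measurable_outB a b (measurableSet_singleton β))
  have hind : {q | outA a q = α ∧ outB a b q = β}.indicator 1 = fun q =>
      1 / 4 + α / 4 * outA a q + β / 4 * outB a b q + α * β / 4 * (outA a q * outB a b q) := by
    ext q
    rcases outA_eq_one_or a q with hA | hA <;> rcases outB_eq_one_or a b q with hB | hB <;>
    rcases hα with rfl | rfl <;> rcases hβ with rfl | rfl <;>
    norm_num [Set.indicator, hA, hB]
  have hA := (integrable_outA a).const_mul (α / 4)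
  have hB := (integrable_outB a b).const_mul (β / 4)
  have hAB := (integrable_outA_mul_outB a b).const_mul (α * β / 4)
  have h1A : Integrable (fun q => 1 / 4 + α / 4 * outA a q) nlMeasure :=
    (integrable_const _).add hA
  have h1AB : Integrable (fun q => 1 / 4 + α / 4 * outA a q + β / 4 * outB a b q) nlMeasure :=
    h1A.add hB
  rw [← ofReal_measureReal, ← integral_indicator_one hm, hind,
    integral_add h1AB hAB, integral_add h1A hB,
    integral_add (integrable_const _) hA,
    integral_const_mul, integral_const_mul, integral_const_mul, integral_outA ha,
    integral_outB a hb, integral_outA_mul_outB ha hb, integral_const, probReal_univ]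
  congr 1
  simp only [smul_eq_mul]
  ring
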